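/- arXiv:2605.07689 — 8 statements merged into one kernel-verified Lean document; each statement's English description precedes it below -/
import Mathlib

section
/- Let (Ω, μ) be a probability space, G ≥ 2 a natural number, and X : Ω → ℝ a measurable random variable with 0 ≤ X ≤ 1 almost surely. Then E[X^G + (1 − X)^G] ≥ (E[X])^G + (1 − E[X])^G + (G·(G − 1)/2) · Var[X] · m, where m is the infimum over p ∈ [0, 1] of p^(G−2) + (1 − p)^(G−2). -/
/-!
The function `D p = p ^ G + (1 - p) ^ G` has second derivative
`G (G - 1) (p ^ (G - 2) + (1 - p) ^ (G - 2))`, which is at least `G (G - 1) m` on `[0, 1]`.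
So `D p - c * p ^ 2` with `c = G (G - 1) / 2 * m` is convex there (`convexOn_sub_sq`). Jensen's
inequality applied to this function, together with `Var[X] = E[X ^ 2] - E[X] ^ 2`, is the claim.
-/

open MeasureTheory

theorem convexOn_sub_sq (n : ℕ) (m : ℝ)
    (hm : ∀ p ∈ Set.Icc (0 : ℝ) 1, m ≤ p ^ n + (1 - p) ^ n) :
    ConvexOn ℝ (Set.Icc (0 : ℝ) 1)
      (fun p => p ^ (n + 2) + (1 - p) ^ (n + 2)
        - ((n + 2 : ℝ) * (n + 1) / 2 * m) * p ^ 2) := by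
  have hsub (p : ℝ) : HasDerivAt (fun p : ℝ => 1 - p) (-1) p :=
    (hasDerivAt_id p).const_sub 1
  refine convexOn_of_hasDerivWithinAt2_nonneg (convex_Icc 0 1)
    (f' := fun p => (n + 2 : ℝ) * (p ^ (n + 1) - (1 - p) ^ (n + 1) - (n + 1) * m * p))
    (f'' := fun p => (n + 2 : ℝ) * ((n + 1) * (p ^ n + (1 - p) ^ n - m)))
    (by fun_prop) (fun p _ => ?_) (fun p _ => ?_) (fun p hp => ?_)
  · refine (HasDerivAt.congr_deriv (((hasDerivAt_pow (n + 2) p).add ((hsub p).pow (n + 2))).sub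
      ((hasDerivAt_pow 2 p).const_mul ((n + 2 : ℝ) * (n + 1) / 2 * m))) ?_).hasDerivWithinAt
    rw [show n + 2 - 1 = n + 1 from rfl]
    push_cast
    ring
  · refine (HasDerivAt.congr_deriv ((((hasDerivAt_pow (n + 1) p).sub ((hsub p).pow (n + 1))).sub
      ((hasDerivAt_id p).const_mul ((n + 1 : ℝ) * m))).const_mul (n + 2 : ℝ)) ?_).hasDerivWithinAt
    rw [show n + 1 - 1 = n from rfl]
    push_cast
    ring
  · have := hm p (interior_subset hp)
    have : 0 ≤ p ^ n + (1 - p) ^ n - m := by linarith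
    positivity

/-- Variance-strengthened Jensen bound: for a probability space `(Ω, μ)`, `G ≥ 2`, and a
measurable `X : Ω → ℝ` with `0 ≤ X ≤ 1` almost surely,
`E[X^G + (1 − X)^G] ≥ (E[X])^G + (1 − E[X])^G + (G (G−1)/2)·Var[X]·m`,
where `m` is the infimum over `p ∈ [0, 1]` of `p^(G−2) + (1 − p)^(G−2)`. -/
theorem degeneracy_jensen_variance_bound {Ω : Type*} [MeasurableSpace Ω] (μ : Measure Ω)
    [IsProbabilityMeasure μ] (G : ℕ) (hG : 2 ≤ G) (X : Ω → ℝ) (hX : Measurable X)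
    (h01 : ∀ᵐ ω ∂μ, X ω ∈ Set.Icc (0 : ℝ) 1) :
    ∫ ω, ((X ω) ^ G + (1 - X ω) ^ G) ∂μ
      ≥ (∫ ω, X ω ∂μ) ^ G + (1 - ∫ ω, X ω ∂μ) ^ G
        + ((G : ℝ) * ((G : ℝ) - 1) / 2) * ProbabilityTheory.variance X μ
          * sInf ((fun p : ℝ => p ^ (G - 2) + (1 - p) ^ (G - 2)) '' Set.Icc (0 : ℝ) 1) := by
  obtain ⟨n, rfl⟩ := Nat.exists_eq_add_of_le' hG
  simp only [Nat.add_sub_cancel]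
  set m := sInf ((fun p : ℝ => p ^ n + (1 - p) ^ n) '' Set.Icc (0 : ℝ) 1)
  have hm (p : ℝ) (hp : p ∈ Set.Icc (0 : ℝ) 1) : m ≤ p ^ n + (1 - p) ^ n := by
    refine csInf_le ⟨0, ?_⟩ ⟨p, hp, rfl⟩
    rintro _ ⟨q, hq, rfl⟩
    exact add_nonneg (pow_nonneg hq.1 n) (pow_nonneg (sub_nonneg.2 hq.2) n)
  have hmem (q : ENNReal) : MemLp X q μ :=
    memLp_of_bounded h01 hX.aestronglyMeasurable q
  have hsq : Integrable (fun ω => X ω ^ 2) μ := (hmem 2).integrable_sq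
  have hD : Integrable (fun ω => X ω ^ (n + 2) + (1 - X ω) ^ (n + 2)) μ := by
    refine Integrable.of_mem_Icc 0 2 (by fun_prop) ?_
    filter_upwards [h01] with ω ⟨h0, h1⟩
    have h0' : 0 ≤ 1 - X ω := sub_nonneg.2 h1
    refine ⟨by positivity, ?_⟩
    linarith [pow_le_one₀ (n := n + 2) h0 h1,
      pow_le_one₀ (n := n + 2) h0' (sub_le_self 1 h0)]
  have hJ := (convexOn_sub_sq n m hm).map_integral_le (by fun_prop) isClosed_Icc h01
    ((hmem 1).integrable le_rfl) (hD.sub (hsq.const_mul _))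
  rw [integral_sub hD (hsq.const_mul _), integral_const_mul] at hJ
  rw [ProbabilityTheory.variance_eq_sub (hmem 2)]
  simp only [Pi.pow_apply]
  push_cast
  linarith
end

section
/- Let f : ℝ → ℝ be twice differentiable on an open set containing [0, 1] with f''(t) ≥ m for all t ∈ [0, 1], let (Ω, μ) be a probability space, and let X : Ω → ℝ be measurable with 0 ≤ X ≤ 1 almost surely. Then E[f(X)] ≥ f(E[X]) + (m/2) · Var[X]. -/
/-!
The function `g t = f t - (m / 2) * t ^ 2` has `g'' = f'' - m ≥ 0` on the interior of `[0, 1]`,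
so it is convex there. Jensen's inequality for `g` reads
`f (E[X]) - (m / 2) * E[X] ^ 2 ≤ E[f(X)] - (m / 2) * E[X ^ 2]`,
and `Var[X] = E[X ^ 2] - E[X] ^ 2` turns this into the claim.
-/

open MeasureTheory

/-- No measurability of `f` itself is needed: replacing `f` by zero outside `[0, 1]` does not
change `f ∘ X` almost everywhere. -/
theorem integrable_comp_of_continuousOn_Icc {Ω : Type*} [MeasurableSpace Ω] (μ : Measure Ω)
    [IsProbabilityMeasure μ] (f : ℝ → ℝ) (hf : ContinuousOn f (Set.Icc 0 1))
    (X : Ω → ℝ) (hX : Measurable X) (h01 : ∀ᵐ ω ∂μ, X ω ∈ Set.Icc (0 : ℝ) 1) :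
    Integrable (fun ω => f (X ω)) μ := by
  classical
  obtain ⟨C, hC⟩ := isCompact_Icc.exists_bound_of_continuousOn hf
  have hmeas : Measurable ((Set.Icc (0 : ℝ) 1).piecewise f (fun _ => 0)) :=
    hf.measurable_piecewise continuousOn_const measurableSet_Icc
  refine Integrable.of_bound (C := C) ⟨_, (hmeas.comp hX).stronglyMeasurable, ?_⟩ ?_
  · filter_upwards [h01] with ω hω
    simp only [Function.comp_apply, Set.piecewise_eq_of_mem _ _ _ hω]
  · filter_upwards [h01] with ω hω using hC _ hω

/-- Strengthened Jensen inequality: if `f : ℝ → ℝ` is twice differentiable on an open set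
containing `[0, 1]` with `f'' ≥ m` on `[0, 1]`, `(Ω, μ)` is a probability space, and
`X : Ω → ℝ` is measurable with `0 ≤ X ≤ 1` almost surely, then
`E[f(X)] ≥ f(E[X]) + (m/2)·Var[X]`. -/
theorem jensen_with_variance {Ω : Type*} [MeasurableSpace Ω] (μ : Measure Ω)
    [IsProbabilityMeasure μ] (f : ℝ → ℝ) (U : Set ℝ) (hU : IsOpen U)
    (hUI : Set.Icc (0 : ℝ) 1 ⊆ U)
    (hf : ∀ t ∈ U, DifferentiableAt ℝ f t)
    (hf' : ∀ t ∈ U, DifferentiableAt ℝ (deriv f) t)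
    (m : ℝ) (hm : ∀ t ∈ Set.Icc (0 : ℝ) 1, deriv (deriv f) t ≥ m)
    (X : Ω → ℝ) (hX : Measurable X) (h01 : ∀ᵐ ω ∂μ, X ω ∈ Set.Icc (0 : ℝ) 1) :
    ∫ ω, f (X ω) ∂μ ≥ f (∫ ω, X ω ∂μ) + (m / 2) * ProbabilityTheory.variance X μ := by
  have hfc : ContinuousOn f (Set.Icc 0 1) := fun t ht =>
    (hf t (hUI ht)).continuousAt.continuousWithinAt
  have hgc : ContinuousOn (fun t => f t - m / 2 * t ^ 2) (Set.Icc 0 1) :=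
    hfc.sub (by fun_prop)
  have hconv : ConvexOn ℝ (Set.Icc 0 1) (fun t => f t - m / 2 * t ^ 2) := by
    refine convexOn_of_hasDerivWithinAt2_nonneg (f' := fun t => deriv f t - m * t)
      (f'' := fun t => deriv (deriv f) t - m) (convex_Icc 0 1) hgc ?_ ?_ ?_
    · intro t ht
      have h := (hf t (hUI (interior_subset ht))).hasDerivAt.sub
        (((hasDerivAt_id t).pow 2).const_mul (m / 2))
      refine (h.congr_deriv ?_).hasDerivWithinAt
      simp
      ring
    · intro t ht
      have h := (hf' t (hUI (interior_subset ht))).hasDerivAt.sub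
        ((hasDerivAt_id t).const_mul m)
      exact (h.congr_deriv (by simp)).hasDerivWithinAt
    · intro t ht
      exact sub_nonneg.2 (hm t (interior_subset ht))
  have hfX := integrable_comp_of_continuousOn_Icc μ f hfc X hX h01
  have hX1 := integrable_comp_of_continuousOn_Icc μ (fun t => t) continuousOn_id X hX h01
  have hX2 := integrable_comp_of_continuousOn_Icc μ (fun t => t ^ 2) (by fun_prop) X hX h01
  have hJ := hconv.map_integral_le hgc isClosed_Icc h01 hX1
    (hfX.sub (hX2.const_mul (m / 2)))
  rw [integral_sub hfX (hX2.const_mul (m / 2)), integral_const_mul] at hJ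
  have hV : ProbabilityTheory.variance X μ = ∫ ω, X ω ^ 2 ∂μ - (∫ ω, X ω ∂μ) ^ 2 :=
    ProbabilityTheory.variance_eq_sub
      ((memLp_two_iff_integrable_sq hX.aestronglyMeasurable).2 hX2)
  rw [hV]
  linarith
end

section
/- In the finite-policy setting, assume q(θ₀) > 0 and let c > 0 and G ≥ 1. Conditioned on an all-fail group, the expected gradient of the fixed-reference loss L₀ = (c/G)·∑_i log π θ (f i) equals −c·(deriv p at θ₀)/q(θ₀); formally, ∑ over all f : Fin G → Y with f i ∉ C for every i of ((∏_i π θ₀ (f i)) / q(θ₀)^G) · (c/G)·∑_i s(f i) = c · deriv (θ ↦ log (q θ)) θ₀ = −c · (deriv (θ ↦ p θ) θ₀) / q(θ₀). -/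
/-!
The proof is the log-derivative trick applied to whole groups. By distributivity, the total
sampling weight of the all-fail groups is `∑_f ∏ᵢ π θ (f i) = q(θ)^G`, where `q(θ)` is the sum of
`π θ` over the complement of `C`. Differentiating both sides at `θ₀`, with
`d/dθ ∏ᵢ π θ (f i) = (∏ᵢ π θ₀ (f i)) · ∑ᵢ s(f i)`, gives
`∑_f (∏ᵢ π θ₀ (f i)) · ∑ᵢ s(f i) = G · q(θ₀)^(G-1) · q'(θ₀)`
(`sum_allFail_prod_mul_score`). Multiplying by `c / (G · q(θ₀)^G)` yields
`c · q'(θ₀) / q(θ₀)`, and `q' = -p'`.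
-/

/-- The log-derivative trick for a finite product of nonvanishing factors. -/
theorem hasDerivAt_prod_eq_prod_mul_sum_logDeriv {ι : Type*} [Fintype ι] [DecidableEq ι]
    (g : ι → ℝ → ℝ) (x : ℝ) (hg : ∀ i, g i x ≠ 0) (hd : ∀ i, DifferentiableAt ℝ (g i) x) :
    HasDerivAt (fun t => ∏ i, g i t)
      ((∏ i, g i x) * ∑ i, deriv (fun t => Real.log (g i t)) x) x := by
  have h := HasDerivAt.fun_finsetProd (u := Finset.univ) fun i _ => (hd i).hasDerivAt
  refine h.congr_deriv ?_
  rw [Finset.mul_sum]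
  refine Finset.sum_congr rfl fun i _ => ?_
  rw [deriv.log (hd i) (hg i), ← Finset.prod_erase_mul Finset.univ _ (Finset.mem_univ i),
    smul_eq_mul]
  have := hg i
  field_simp

/-- Unnormalized form of the all-fail expected score: the derivative of
`θ ↦ (∑ y ∈ D, π θ y) ^ G`, computed termwise over the groups with all members in `D`. -/
theorem sum_allFail_prod_mul_score {Y : Type*} [DecidableEq Y] (π : ℝ → Y → ℝ) (θ₀ : ℝ)
    (hne : ∀ y, π θ₀ y ≠ 0) (hdiff : ∀ y, DifferentiableAt ℝ (fun θ => π θ y) θ₀)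
    (D : Finset Y) (G : ℕ) (q' : ℝ) (hq' : HasDerivAt (fun θ => ∑ y ∈ D, π θ y) q' θ₀) :
    ∑ f ∈ Fintype.piFinset (fun _ : Fin G => D),
        (∏ i, π θ₀ (f i)) * ∑ i, deriv (fun θ => Real.log (π θ (f i))) θ₀
      = G * (∑ y ∈ D, π θ₀ y) ^ (G - 1) * q' := by
  have hsum : HasDerivAt
      (fun θ => ∑ f ∈ Fintype.piFinset (fun _ : Fin G => D), ∏ i, π θ (f i)) _ θ₀ :=
    HasDerivAt.fun_sum fun f _ =>
      hasDerivAt_prod_eq_prod_mul_sum_logDeriv (fun i θ => π θ (f i)) θ₀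
        (fun i => hne (f i)) (fun i => hdiff (f i))
  have hpow : (fun θ => ∑ f ∈ Fintype.piFinset (fun _ : Fin G => D), ∏ i, π θ (f i))
      = fun θ => (∑ y ∈ D, π θ y) ^ G := by
    funext θ
    rw [← Finset.prod_univ_sum (fun _ : Fin G => D) (fun _ y => π θ y)]
    simp
  rw [hpow] at hsum
  exact hsum.unique (hq'.fun_pow G)

/-- Conditional all-fail gradient: in the finite-policy setting with `q(θ₀) > 0`, `c > 0`,
and `G ≥ 1`, conditioned on an all-fail group the expected gradient of the fixed-reference
loss `L₀ = (c/G)·∑ᵢ log π θ (f i)` equals `c · d/dθ log q(θ)|_{θ₀} = −c·p'(θ₀)/q(θ₀)`. -/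
theorem all_fail_conditional_expected_gradient {Y : Type*} [Fintype Y] [DecidableEq Y]
    [Nonempty Y] (π : ℝ → Y → ℝ) (θ₀ : ℝ)
    (hpos : ∀ θ y, 0 < π θ y) (hnorm : ∀ θ, ∑ y, π θ y = 1)
    (hdiff : ∀ y, DifferentiableAt ℝ (fun θ => π θ y) θ₀)
    (C : Finset Y) (G : ℕ) (hG : 1 ≤ G) (c : ℝ) (hc : 0 < c)
    (hq : 0 < 1 - ∑ y ∈ C, π θ₀ y) :
    (∑ f ∈ Finset.univ.filter (fun f : Fin G → Y => ∀ i, f i ∉ C),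
        ((∏ i, π θ₀ (f i)) / (1 - ∑ y ∈ C, π θ₀ y) ^ G)
          * ((c / (G : ℝ)) * ∑ i, deriv (fun θ => Real.log (π θ (f i))) θ₀))
      = c * deriv (fun θ => Real.log (1 - ∑ y ∈ C, π θ y)) θ₀ ∧
    c * deriv (fun θ => Real.log (1 - ∑ y ∈ C, π θ y)) θ₀
      = -c * deriv (fun θ => ∑ y ∈ C, π θ y) θ₀ / (1 - ∑ y ∈ C, π θ₀ y) := by
  have hp : DifferentiableAt ℝ (fun θ => ∑ y ∈ C, π θ y) θ₀ :=
    DifferentiableAt.fun_sum fun y _ => hdiff y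
  have hq' : HasDerivAt (fun θ => 1 - ∑ y ∈ C, π θ y)
      (-deriv (fun θ => ∑ y ∈ C, π θ y) θ₀) θ₀ := hp.hasDerivAt.const_sub 1
  have hlog : deriv (fun θ => Real.log (1 - ∑ y ∈ C, π θ y)) θ₀
      = -deriv (fun θ => ∑ y ∈ C, π θ y) θ₀ / (1 - ∑ y ∈ C, π θ₀ y) :=
    (hq'.log hq.ne').deriv
  have hcompl : ∀ θ, 1 - ∑ y ∈ C, π θ y = ∑ y ∈ Cᶜ, π θ y := fun θ => by
    rw [← hnorm θ, ← Finset.sum_add_sum_compl C, add_sub_cancel_left]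
  have hfilter : Finset.univ.filter (fun f : Fin G → Y => ∀ i, f i ∉ C)
      = Fintype.piFinset (fun _ : Fin G => Cᶜ) := by
    ext f
    simp
  have hkey := sum_allFail_prod_mul_score π θ₀ (fun y => (hpos θ₀ y).ne') hdiff Cᶜ G _
    (by simpa only [hcompl] using hq')
  rw [← hcompl θ₀] at hkey
  refine ⟨?_, by rw [hlog]; ring⟩
  rw [hlog, hfilter]
  set q := 1 - ∑ y ∈ C, π θ₀ y
  have hG0 : (G : ℝ) ≠ 0 := Nat.cast_ne_zero.mpr (by omega)
  -- `G ≥ 1` allows one factor `q` to be split off the normalization `q ^ G`.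
  have hqG : q ^ G = q ^ (G - 1) * q := (pow_sub_one_mul (by omega) q).symm
  calc _ = c / (G * q ^ G) * ∑ f ∈ Fintype.piFinset (fun _ : Fin G => Cᶜ),
          (∏ i, π θ₀ (f i)) * ∑ i, deriv (fun θ => Real.log (π θ (f i))) θ₀ := by
        rw [Finset.mul_sum]
        refine Finset.sum_congr rfl fun f _ => ?_
        field_simp
    _ = _ := by
        rw [hkey, hqG]
        have := hq.ne'
        field_simp
end

section
/- Pass@G failure descent: in the finite-policy setting with G ≥ 1 and c > 0, the expected gradient contribution from all-fail groups under a fixed-reference advantage equals (c/G) times the derivative of the group failure probability; formally, ∑ over all f : Fin G → Y with f i ∉ C for every i of (∏_i π θ₀ (f i)) · (c/G)·∑_i s(f i) = −c · q(θ₀)^(G−1) · deriv (θ ↦ p θ) θ₀ = (c/G) · deriv (θ ↦ (q θ)^G) θ₀. In particular, gradient descent on this term performs gradient ascent on pass@G = 1 − q^G. -/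
/-!
The failure probability of a group, `q ^ G`, is by independence the total weight
`∑ f, ∏ i, π θ (f i)` of the all-fail groups (`failProb_pow_eq_sum`). Differentiating this finite
sum term by term with the log-derivative trick, the derivative of a product being the product
times the sum of the scores of its factors (`hasDerivAt_groupProb`), gives exactly the sum of
weighted scores. The expected gradient is therefore `c / G` times the derivative of `q ^ G`, which
the chain rule evaluates as `-c * q ^ (G - 1)` times the derivative of `p`.
-/

/-- Log-derivative trick for the probability of a group of i.i.d. samples. -/
lemma hasDerivAt_groupProb {Y : Type*} (π : ℝ → Y → ℝ) (θ₀ : ℝ) (hpos : ∀ y, 0 < π θ₀ y)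
    (hdiff : ∀ y, DifferentiableAt ℝ (fun θ => π θ y) θ₀) {G : ℕ} (f : Fin G → Y) :
    HasDerivAt (fun θ => ∏ i, π θ (f i))
      ((∏ i, π θ₀ (f i)) * ∑ i, deriv (fun θ => Real.log (π θ (f i))) θ₀) θ₀ := by
  have h := HasDerivAt.fun_finsetProd (u := Finset.univ)
    (fun i _ => (hdiff (f i)).hasDerivAt)
  refine h.congr_deriv (Eq.symm ?_)
  rw [Finset.mul_sum]
  refine Finset.sum_congr rfl fun i hi => ?_
  rw [deriv.log (hdiff (f i)) (hpos _).ne', ← Finset.prod_erase_mul _ _ hi, smul_eq_mul]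
  have := (hpos (f i)).ne'
  field_simp

/-- By independence, `q ^ G` is the total probability of the all-fail groups. -/
lemma failProb_pow_eq_sum {Y : Type*} [Fintype Y] [DecidableEq Y] (w : Y → ℝ)
    (hw : ∑ y, w y = 1) (C : Finset Y) (G : ℕ) :
    (1 - ∑ y ∈ C, w y) ^ G
      = ∑ f ∈ Finset.univ.filter (fun f : Fin G → Y => ∀ i, f i ∉ C), ∏ i, w (f i) := by
  have hq : 1 - ∑ y ∈ C, w y = ∑ y ∈ Cᶜ, w y := by
    rw [← hw, ← Finset.sum_add_sum_compl C w, add_sub_cancel_left]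
  have hS : Finset.univ.filter (fun f : Fin G → Y => ∀ i, f i ∉ C)
      = Fintype.piFinset (fun _ => Cᶜ) := by
    ext f
    simp [Fintype.mem_piFinset]
  rw [hq, hS, ← Finset.prod_univ_sum, Finset.prod_const, Finset.card_univ, Fintype.card_fin]


/-- Pass@G failure descent: in the finite-policy setting with `G ≥ 1` and `c > 0`, the
expected gradient contribution from all-fail groups under a fixed-reference advantage
equals `−c·q(θ₀)^(G−1)·p'(θ₀) = (c/G)·d/dθ (q θ)^G |_{θ₀}`; gradient descent on this term
performs gradient ascent on `pass@G = 1 − q^G`. -/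
theorem passG_failure_descent {Y : Type*} [Fintype Y] [DecidableEq Y] [Nonempty Y]
    (π : ℝ → Y → ℝ) (θ₀ : ℝ)
    (hpos : ∀ θ y, 0 < π θ y) (hnorm : ∀ θ, ∑ y, π θ y = 1)
    (hdiff : ∀ y, DifferentiableAt ℝ (fun θ => π θ y) θ₀)
    (C : Finset Y) (G : ℕ) (hG : 1 ≤ G) (c : ℝ) (hc : 0 < c) :
    (∑ f ∈ Finset.univ.filter (fun f : Fin G → Y => ∀ i, f i ∉ C),
        (∏ i, π θ₀ (f i))
          * ((c / (G : ℝ)) * ∑ i, deriv (fun θ => Real.log (π θ (f i))) θ₀))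
      = -c * (1 - ∑ y ∈ C, π θ₀ y) ^ (G - 1) * deriv (fun θ => ∑ y ∈ C, π θ y) θ₀ ∧
    -c * (1 - ∑ y ∈ C, π θ₀ y) ^ (G - 1) * deriv (fun θ => ∑ y ∈ C, π θ y) θ₀
      = (c / (G : ℝ)) * deriv (fun θ => (1 - ∑ y ∈ C, π θ y) ^ G) θ₀ := by
  have hp : HasDerivAt (fun θ => ∑ y ∈ C, π θ y) (deriv (fun θ => ∑ y ∈ C, π θ y) θ₀) θ₀ :=
    (DifferentiableAt.fun_sum fun y _ => hdiff y).hasDerivAt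
  have hchain : -c * (1 - ∑ y ∈ C, π θ₀ y) ^ (G - 1) * deriv (fun θ => ∑ y ∈ C, π θ y) θ₀
      = (c / (G : ℝ)) * deriv (fun θ => (1 - ∑ y ∈ C, π θ y) ^ G) θ₀ := by
    rw [((hp.const_sub 1).fun_pow G).deriv]
    have hG0 : (G : ℝ) ≠ 0 := by exact_mod_cast (by omega : G ≠ 0)
    field_simp
  refine ⟨?_, hchain⟩
  rw [hchain]
  simp_rw [fun θ => failProb_pow_eq_sum (π θ) (hnorm θ) C G]
  rw [(HasDerivAt.fun_sum fun f _ => hasDerivAt_groupProb π θ₀ (hpos θ₀) hdiff f).deriv,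
    Finset.mul_sum]
  exact Finset.sum_congr rfl fun f _ => by ring
end

section
/- Combined degenerate-group gradient: in the finite-policy setting with G ≥ 1 and a > 0, suppose all-fail groups receive advantage −a for every response and all-pass groups receive advantage +a for every response, with policy-gradient loss L = −(1/G)·∑_i A_i · log π θ (f i). Then the total expected gradient over degenerate groups is ∑ over all-fail f of (∏_i π θ₀ (f i))·(a/G)·∑_i s(f i) + ∑ over all-pass f of (∏_i π θ₀ (f i))·(−(a/G))·∑_i s(f i) = −a · (q(θ₀)^(G−1) + p(θ₀)^(G−1)) · deriv (θ ↦ p θ) θ₀. -/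
/-!
For any set `S` of completions, the probability that a whole group of size `G` lies in `S` is
`∑ f, ∏ i, π θ (f i) = (∑ y ∈ S, π θ y) ^ G`. Differentiating the left side by the log-derivative
trick gives the score-weighted sum over the groups contained in `S`, and differentiating the right
side gives `G * (∑ y ∈ S, π θ y) ^ (G - 1)` times the derivative of the mass of `S`
(`sum_group_score`). The theorem is this identity for `S = Cᶜ` and `S = C`, the mass of `Cᶜ` being
`1 - p`, whose derivative is `-p'`.
-/

/-- Log-derivative trick for the sampling probability of one group. -/
lemma hasDerivAt_group_prob {Y : Type*} (π : ℝ → Y → ℝ) (θ₀ : ℝ)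
    (hpos : ∀ θ y, 0 < π θ y)
    (hdiff : ∀ y, DifferentiableAt ℝ (fun θ => π θ y) θ₀) {G : ℕ} (f : Fin G → Y) :
    HasDerivAt (fun θ => ∏ i, π θ (f i))
      ((∏ i, π θ₀ (f i)) * ∑ i, deriv (fun θ => Real.log (π θ (f i))) θ₀) θ₀ := by
  have hexp : ∀ θ, Real.exp (∑ i, Real.log (π θ (f i))) = ∏ i, π θ (f i) := fun θ => by
    rw [Real.exp_sum]
    exact Finset.prod_congr rfl fun i _ => Real.exp_log (hpos θ (f i))
  have h := (HasDerivAt.fun_sum (u := Finset.univ) fun i (_ : i ∈ Finset.univ) =>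
    ((hdiff (f i)).log (hpos θ₀ (f i)).ne').hasDerivAt).exp
  simpa only [hexp] using h

lemma sum_group_score {Y : Type*} [Fintype Y] [DecidableEq Y]
    (π : ℝ → Y → ℝ) (θ₀ : ℝ) (hpos : ∀ θ y, 0 < π θ y)
    (hdiff : ∀ y, DifferentiableAt ℝ (fun θ => π θ y) θ₀) (S : Finset Y) (G : ℕ) :
    ∑ f ∈ Finset.univ.filter (fun f : Fin G → Y => ∀ i, f i ∈ S),
        (∏ i, π θ₀ (f i)) * ∑ i, deriv (fun θ => Real.log (π θ (f i))) θ₀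
      = G * (∑ y ∈ S, π θ₀ y) ^ (G - 1) * deriv (fun θ => ∑ y ∈ S, π θ y) θ₀ := by
  have hpow : ∀ θ, ∑ f ∈ Finset.univ.filter (fun f : Fin G → Y => ∀ i, f i ∈ S),
      ∏ i, π θ (f i) = (∑ y ∈ S, π θ y) ^ G := fun θ => by
    have hS : Finset.univ.filter (fun f : Fin G → Y => ∀ i, f i ∈ S)
        = Fintype.piFinset fun _ => S := by
      ext f
      simp
    rw [hS, ← Finset.prod_univ_sum (fun _ => S) (fun _ y => π θ y)]
    simp
  have h₁ := HasDerivAt.fun_sum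
    (u := Finset.univ.filter (fun f : Fin G → Y => ∀ i, f i ∈ S))
    fun f _ => hasDerivAt_group_prob π θ₀ hpos hdiff f
  simp only [hpow] at h₁
  have hmass : DifferentiableAt ℝ (fun θ => ∑ y ∈ S, π θ y) θ₀ :=
    DifferentiableAt.fun_sum fun y _ => hdiff y
  exact h₁.unique (hmass.hasDerivAt.fun_pow G)

/-- Combined degenerate-group gradient: in the finite-policy setting with `G ≥ 1` and
`a > 0`, if all-fail groups receive advantage `−a` and all-pass groups advantage `+a`
for every response, the total expected gradient over degenerate groups equals
`−a·(q(θ₀)^(G−1) + p(θ₀)^(G−1))·p'(θ₀)`. -/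
theorem degenerate_group_gradient {Y : Type*} [Fintype Y] [DecidableEq Y] [Nonempty Y]
    (π : ℝ → Y → ℝ) (θ₀ : ℝ)
    (hpos : ∀ θ y, 0 < π θ y) (hnorm : ∀ θ, ∑ y, π θ y = 1)
    (hdiff : ∀ y, DifferentiableAt ℝ (fun θ => π θ y) θ₀)
    (C : Finset Y) (G : ℕ) (hG : 1 ≤ G) (a : ℝ) (ha : 0 < a) :
    (∑ f ∈ Finset.univ.filter (fun f : Fin G → Y => ∀ i, f i ∉ C),
        (∏ i, π θ₀ (f i))
          * ((a / (G : ℝ)) * ∑ i, deriv (fun θ => Real.log (π θ (f i))) θ₀))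
    + (∑ f ∈ Finset.univ.filter (fun f : Fin G → Y => ∀ i, f i ∈ C),
        (∏ i, π θ₀ (f i))
          * (-(a / (G : ℝ)) * ∑ i, deriv (fun θ => Real.log (π θ (f i))) θ₀))
      = -a * ((1 - ∑ y ∈ C, π θ₀ y) ^ (G - 1) + (∑ y ∈ C, π θ₀ y) ^ (G - 1))
          * deriv (fun θ => ∑ y ∈ C, π θ y) θ₀ := by
  have hG0 : (G : ℝ) ≠ 0 := by
    exact_mod_cast (by omega : G ≠ 0)
  have hq : ∀ θ, ∑ y ∈ Cᶜ, π θ y = 1 - ∑ y ∈ C, π θ y := fun θ => by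
    rw [← hnorm θ, ← Finset.sum_compl_add_sum C, add_sub_cancel_right]
  have hfail := sum_group_score π θ₀ hpos hdiff Cᶜ G
  have hpass := sum_group_score π θ₀ hpos hdiff C G
  simp only [hq, Finset.mem_compl, deriv_const_sub] at hfail
  simp only [mul_left_comm _ (a / (G : ℝ)), mul_left_comm _ (-(a / (G : ℝ))),
    ← Finset.mul_sum, hfail, hpass]
  field_simp
  ring
end

section
/- Pass@k monotonicity (corollary to failure descent): in the finite-policy setting with G ≥ 1, assume 0 < p(θ₀) < 1 and deriv (θ ↦ p θ) θ₀ ≠ 0, and let g = q(θ₀)^(G−1) · deriv (θ ↦ p θ) θ₀ be the negative of the expected all-fail Sign gradient (c = 1). Then for every natural number k ≥ 1, the map θ ↦ 1 − (1 − p θ)^k is differentiable at θ₀ with derivative k·(1 − p(θ₀))^(k−1)·deriv (θ ↦ p θ) θ₀, and g · deriv (θ ↦ 1 − (1 − p θ)^k) θ₀ = k · q(θ₀)^(G−1) · (1 − p(θ₀))^(k−1) · (deriv (θ ↦ p θ) θ₀)² > 0; that is, the all-fail Sign gradient direction locally increases pass@k for every k ≥ 1. -/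
/-!
The success probability `p` is a finite sum of functions differentiable at `θ₀`, so the chain rule
gives `(1 - (1 - p) ^ k)' = k (1 - p) ^ (k - 1) p'` there. Multiplying by `(1 - p) ^ (G - 1) p'`
produces a positive multiple of `p' ^ 2`, because `p(θ₀) < 1`, `k ≥ 1` and `p'(θ₀) ≠ 0`.
-/

/-- Pass@k monotonicity: in the finite-policy setting with `G ≥ 1`, `0 < p(θ₀) < 1`, and
`p'(θ₀) ≠ 0`, the all-fail Sign gradient direction `g = q(θ₀)^(G−1)·p'(θ₀)` locally
increases `pass@k = 1 − (1 − p)^k` for every `k ≥ 1`. -/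
theorem passk_monotone_corollary {Y : Type*} [Fintype Y] [Nonempty Y]
    (π : ℝ → Y → ℝ) (θ₀ : ℝ)
    (hpos : ∀ θ y, 0 < π θ y) (hnorm : ∀ θ, ∑ y, π θ y = 1)
    (hdiff : ∀ y, DifferentiableAt ℝ (fun θ => π θ y) θ₀)
    (C : Finset Y) (G : ℕ) (hG : 1 ≤ G)
    (hp0 : 0 < ∑ y ∈ C, π θ₀ y) (hp1 : ∑ y ∈ C, π θ₀ y < 1)
    (hd : deriv (fun θ => ∑ y ∈ C, π θ y) θ₀ ≠ 0) :
    ∀ k : ℕ, 1 ≤ k →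
      HasDerivAt (fun θ => 1 - (1 - ∑ y ∈ C, π θ y) ^ k)
          ((k : ℝ) * (1 - ∑ y ∈ C, π θ₀ y) ^ (k - 1)
            * deriv (fun θ => ∑ y ∈ C, π θ y) θ₀) θ₀ ∧
      ((1 - ∑ y ∈ C, π θ₀ y) ^ (G - 1) * deriv (fun θ => ∑ y ∈ C, π θ y) θ₀)
          * deriv (fun θ => 1 - (1 - ∑ y ∈ C, π θ y) ^ k) θ₀
        = (k : ℝ) * (1 - ∑ y ∈ C, π θ₀ y) ^ (G - 1) * (1 - ∑ y ∈ C, π θ₀ y) ^ (k - 1)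
            * (deriv (fun θ => ∑ y ∈ C, π θ y) θ₀) ^ 2 ∧
      0 < (k : ℝ) * (1 - ∑ y ∈ C, π θ₀ y) ^ (G - 1) * (1 - ∑ y ∈ C, π θ₀ y) ^ (k - 1)
            * (deriv (fun θ => ∑ y ∈ C, π θ y) θ₀) ^ 2 := by
  intro k hk
  have hp : HasDerivAt (fun θ => ∑ y ∈ C, π θ y)
      (deriv (fun θ => ∑ y ∈ C, π θ y) θ₀) θ₀ :=
    (DifferentiableAt.fun_sum fun y _ => hdiff y).hasDerivAt
  have hq : 0 < 1 - ∑ y ∈ C, π θ₀ y := sub_pos.mpr hp1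
  have hk0 : (0 : ℝ) < k := by exact_mod_cast hk
  have hpass : HasDerivAt (fun θ => 1 - (1 - ∑ y ∈ C, π θ y) ^ k)
      ((k : ℝ) * (1 - ∑ y ∈ C, π θ₀ y) ^ (k - 1)
        * deriv (fun θ => ∑ y ∈ C, π θ y) θ₀) θ₀ := by
    refine (((hp.const_sub 1).fun_pow k).const_sub 1).congr_deriv ?_
    ring
  refine ⟨hpass, ?_, by positivity⟩
  rw [hpass.deriv]
  ring
end

section
/- TASA expected gradient coefficient: in the finite-policy setting with G ≥ 1, assume 0 < p(θ₀) < 1. For a group f : Fin G → Y with n(f) = #{i : f i ∈ C} correct responses, define the TASA advantages: if n(f) = 0 then A_i(f) = −1/G for all i; if n(f) = G then A_i(f) = +1/G for all i; otherwise A_i(f) = 1/n(f) for correct responses and A_i(f) = −1/(G − n(f)) for incorrect responses. Then the expected group gradient satisfies ∑ over all f : Fin G → Y of (∏_i π θ₀ (f i)) · (1/G)·∑_i A_i(f)·s(f i) = [ (p(θ₀)^(G−1) + q(θ₀)^(G−1))/G + (1 − p(θ₀)^G − q(θ₀)^G)·(1/G)·(1/p(θ₀) + 1/q(θ₀)) ]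 · deriv (θ ↦ p θ) θ₀. -/
/-!
The advantage `A_i(f)` depends on the group `f` only through the set `S` of correct positions.
Conditionally on `S`, the responses are independent, each distributed as `π θ₀` restricted to
`C` or to `Cᶜ`. Since `π s = π'` pointwise and `∑ y, π θ y = 1`, the conditional mean of the score
is `p'/p` at a correct position and `-p'/q` at an incorrect one, so the score may be replaced by
this two-valued function (`sum_pattern_mul_eq_zero` applied to the difference).
After that replacement the inner sum depends only on `n = #S`: it is `p'/q` for `n = 0`, `p'/p`
for `n = G`, and `p'/p + p'/q` otherwise (`sum_advantage`). The first two events have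
probabilities `q ^ G` and `p ^ G`, which gives the claim.
-/

open Finset in
/-- If `h` has mean zero under the weight `w` on both `C` and `Cᶜ`, then `h (f i)` is orthogonal
to every function of the pattern `{j | f j ∈ C}`: on a fixed pattern the sum over groups
factorizes, and the factor at position `i` vanishes. -/
lemma sum_pattern_mul_eq_zero {Y : Type*} [Fintype Y] [DecidableEq Y] {G : ℕ} (w h : Y → ℝ)
    (C : Finset Y) (hC : ∑ y ∈ C, w y * h y = 0) (hCc : ∑ y ∈ Cᶜ, w y * h y = 0)
    (A : Finset (Fin G) → ℝ) (i : Fin G) :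
    ∑ f : Fin G → Y, (∏ j, w (f j)) * (A (univ.filter (fun j => f j ∈ C)) * h (f i)) = 0 := by
  rw [← Finset.sum_fiberwise (s := univ) (g := fun f : Fin G → Y => univ.filter (fun j => f j ∈ C))]
  refine Finset.sum_eq_zero fun S _ => ?_
  have hfib : (univ.filter fun f : Fin G → Y => univ.filter (fun j => f j ∈ C) = S)
      = Fintype.piFinset (fun j => if j ∈ S then C else Cᶜ) := by
    ext f
    simp only [mem_filter, mem_univ, true_and, Fintype.mem_piFinset, Finset.ext_iff]
    refine forall_congr' fun j => ?_
    by_cases hj : j ∈ S <;> simp [hj]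
  calc _ = ∑ f ∈ univ.filter (fun f : Fin G → Y => univ.filter (fun j => f j ∈ C) = S),
        A S * ∏ j, (w (f j) * if j = i then h (f j) else 1) := by
        refine Finset.sum_congr rfl fun f hf => ?_
        rw [(mem_filter.1 hf).2, Finset.prod_mul_distrib, Finset.prod_ite_eq' univ i]
        simp only [mem_univ, if_true]
        ring
    _ = 0 := by
        rw [hfib, ← Finset.mul_sum, ← Finset.prod_univ_sum (fun j => if j ∈ S then C else Cᶜ)
          (fun j y => w y * if j = i then h y else 1)]
        rw [Finset.prod_eq_zero (mem_univ i), mul_zero]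
        by_cases hi : i ∈ S <;> simp [hi, hC, hCc]

open Finset in
/-- The probability that all `G` responses fall in `C`. -/
lemma sum_prod_ite_forall_mem {Y : Type*} [Fintype Y] [DecidableEq Y] {G : ℕ} (w : Y → ℝ)
    (C : Finset Y) :
    ∑ f : Fin G → Y, (∏ j, w (f j)) * (if ∀ j, f j ∈ C then 1 else 0) = (∑ y ∈ C, w y) ^ G := by
  have := Finset.sum_prod_piFinset (ι := Fin G) C (fun _ y => w y)
  simp only [prod_const, card_univ, Fintype.card_fin] at this
  rw [← this]
  simp only [mul_ite, mul_one, mul_zero]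
  rw [← Finset.sum_filter]
  congr 1
  ext f
  simp

open Finset in
/-- The TASA-weighted sum of a function equal to `a` at correct positions and to `-b` at
incorrect ones, where `S` is the set of correct positions. -/
lemma sum_advantage {G : ℕ} (hG : 1 ≤ G) (S : Finset (Fin G)) (a b : ℝ) :
    ∑ i, (if S.card = 0 then -(1 / (G : ℝ)) else if S.card = G then 1 / (G : ℝ)
        else if i ∈ S then 1 / (S.card : ℝ) else -(1 / ((G : ℝ) - (S.card : ℝ))))
      * (if i ∈ S then a else -b)
      = (a + b) - a * (if S.card = 0 then 1 else 0) - b * (if S.card = G then 1 else 0) := by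
  have hG0 : (G : ℝ) ≠ 0 := by positivity
  by_cases h0 : S.card = 0
  · have hS : S = ∅ := Finset.card_eq_zero.1 h0
    have hne : ¬ (0 = G) := by omega
    subst hS
    simp [hne]
    field_simp
  by_cases h1 : S.card = G
  · have hS : S = univ := by
      rw [← Finset.card_eq_iff_eq_univ, h1, Fintype.card_fin]
    have hne : G ≠ 0 := by omega
    subst hS
    simp [hne]
  have hlt : S.card < G := lt_of_le_of_ne (by simpa using Finset.card_le_univ S) h1
  have hn : (S.card : ℝ) ≠ 0 := by exact_mod_cast h0
  have hm : (G : ℝ) - S.card ≠ 0 := by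
    have : (S.card : ℝ) < G := by exact_mod_cast hlt
    linarith
  have hterm : ∀ i, (if i ∈ S then 1 / (S.card : ℝ) else -(1 / ((G : ℝ) - (S.card : ℝ))))
      * (if i ∈ S then a else -b)
      = if i ∈ S then a / S.card else b / ((G : ℝ) - S.card) := by
    intro i
    split_ifs <;> ring
  simp only [h0, h1, if_false, hterm]
  have hcard : ((univ.filter fun i => i ∉ S).card : ℝ) = G - S.card := by
    have : (univ.filter fun i => i ∉ S) = Sᶜ := by ext; simp
    rw [this, Finset.card_compl, Fintype.card_fin, Nat.cast_sub hlt.le]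
  rw [Finset.sum_ite, Finset.sum_const, Finset.sum_const, nsmul_eq_mul, nsmul_eq_mul, hcard]
  simp only [Finset.filter_mem_eq_inter, Finset.univ_inter]
  field_simp
  ring


/-- TASA expected gradient coefficient: in the finite-policy setting with `G ≥ 1` and
`0 < p(θ₀) < 1`, the expected group gradient under the threshold-anchored signed
advantage equals
`[(p^(G−1) + q^(G−1))/G + (1 − p^G − q^G)·(1/G)·(1/p + 1/q)] · p'(θ₀)`. -/
theorem tasa_expected_gradient {Y : Type*} [Fintype Y] [DecidableEq Y] [Nonempty Y]
    (π : ℝ → Y → ℝ) (θ₀ : ℝ)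
    (hpos : ∀ θ y, 0 < π θ y) (hnorm : ∀ θ, ∑ y, π θ y = 1)
    (hdiff : ∀ y, DifferentiableAt ℝ (fun θ => π θ y) θ₀)
    (C : Finset Y) (G : ℕ) (hG : 1 ≤ G)
    (hp0 : 0 < ∑ y ∈ C, π θ₀ y) (hp1 : ∑ y ∈ C, π θ₀ y < 1) :
    ∑ f : Fin G → Y, (∏ i, π θ₀ (f i)) * ((1 / (G : ℝ)) * ∑ i,
        (if (Finset.univ.filter (fun i : Fin G => f i ∈ C)).card = 0 then -(1 / (G : ℝ))
          else if (Finset.univ.filter (fun i : Fin G => f i ∈ C)).card = G then 1 / (G : ℝ)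
          else if f i ∈ C then
            1 / ((Finset.univ.filter (fun i : Fin G => f i ∈ C)).card : ℝ)
          else
            -(1 / ((G : ℝ) - ((Finset.univ.filter (fun i : Fin G => f i ∈ C)).card : ℝ))))
          * deriv (fun θ => Real.log (π θ (f i))) θ₀)
      = (((∑ y ∈ C, π θ₀ y) ^ (G - 1) + (1 - ∑ y ∈ C, π θ₀ y) ^ (G - 1)) / (G : ℝ)
          + (1 - (∑ y ∈ C, π θ₀ y) ^ G - (1 - ∑ y ∈ C, π θ₀ y) ^ G) * (1 / (G : ℝ))
            * (1 / (∑ y ∈ C, π θ₀ y) + 1 / (1 - ∑ y ∈ C, π θ₀ y)))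
        * deriv (fun θ => ∑ y ∈ C, π θ y) θ₀ := by
  have hG0 : (G : ℝ) ≠ 0 := by positivity
  set w : Y → ℝ := π θ₀ with hw
  set p : ℝ := ∑ y ∈ C, w y with hp
  set D : ℝ := deriv (fun θ => ∑ y ∈ C, π θ y) θ₀ with hD
  set s : Y → ℝ := fun y => deriv (fun θ => Real.log (π θ y)) θ₀ with hs
  have hp_ne : p ≠ 0 := hp0.ne'
  have hq_ne : 1 - p ≠ 0 := by linarith
  -- The log-derivative identity: weight times score is the derivative of the weight.
  have hws : ∀ y, w y * s y = deriv (fun θ => π θ y) θ₀ := by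
    intro y
    have hy : π θ₀ y ≠ 0 := (hpos θ₀ y).ne'
    simp only [hs, hw, deriv.log (hdiff y) hy]
    field_simp
  have hDsum : ∀ B : Finset Y, ∑ y ∈ B, w y * s y = deriv (fun θ => ∑ y ∈ B, π θ y) θ₀ := by
    intro B
    rw [deriv_fun_sum fun y _ => hdiff y]
    exact Finset.sum_congr rfl fun y _ => hws y
  have hwsum : ∑ y ∈ Cᶜ, w y = 1 - p := by
    have := Finset.sum_add_sum_compl C w
    rw [hnorm θ₀] at this
    linarith
  have hsC : ∑ y ∈ C, w y * s y = D := hDsum C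
  have hsCc : ∑ y ∈ Cᶜ, w y * s y = -D := by
    have h1 := Finset.sum_add_sum_compl C (fun y => w y * s y)
    have h2 := hDsum Finset.univ
    simp only [hnorm, deriv_const] at h2
    linarith
  -- The conditional mean of the score given correctness.
  set t : Y → ℝ := fun y => if y ∈ C then D / p else -(D / (1 - p)) with ht
  have hC : ∑ y ∈ C, w y * (s y - t y) = 0 := by
    have : ∑ y ∈ C, w y * t y = D := by
      rw [Finset.sum_congr rfl (g := fun y => w y * (D / p)) fun y hy => by simp [ht, hy],
        ← Finset.sum_mul, ← hp]
      field_simp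
    simp only [mul_sub, Finset.sum_sub_distrib, hsC, this, sub_self]
  have hCc : ∑ y ∈ Cᶜ, w y * (s y - t y) = 0 := by
    have : ∑ y ∈ Cᶜ, w y * t y = -D := by
      rw [Finset.sum_congr rfl (g := fun y => w y * -(D / (1 - p))) fun y hy => by
          simp [ht, Finset.mem_compl.1 hy],
        ← Finset.sum_mul, hwsum]
      field_simp
    simp only [mul_sub, Finset.sum_sub_distrib, hsCc, this, sub_self]
  let A : Fin G → Finset (Fin G) → ℝ := fun i S =>
    if S.card = 0 then -(1 / (G : ℝ)) else if S.card = G then 1 / (G : ℝ)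
      else if i ∈ S then 1 / (S.card : ℝ) else -(1 / ((G : ℝ) - (S.card : ℝ)))
  let S : (Fin G → Y) → Finset (Fin G) := fun f => Finset.univ.filter (fun j => f j ∈ C)
  have hmem : ∀ f i, i ∈ S f ↔ f i ∈ C := fun f i => by simp [S]
  have hrepl : ∑ f : Fin G → Y, (∏ i, w (f i)) * ((1 / (G : ℝ)) * ∑ i, A i (S f) * s (f i))
      = ∑ f : Fin G → Y, (∏ i, w (f i)) * ((1 / (G : ℝ)) * ∑ i, A i (S f) * t (f i)) := by
    rw [← sub_eq_zero, ← Finset.sum_sub_distrib]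
    calc _ = ∑ f : Fin G → Y, ∑ i, (1 / (G : ℝ)) *
          ((∏ j, w (f j)) * (A i (S f) * (s (f i) - t (f i)))) := by
          refine Finset.sum_congr rfl fun f _ => ?_
          rw [← mul_sub, ← mul_sub, ← Finset.sum_sub_distrib, Finset.mul_sum, Finset.mul_sum]
          exact Finset.sum_congr rfl fun i _ => by ring
      _ = 0 := by
          rw [Finset.sum_comm]
          refine Finset.sum_eq_zero fun i _ => ?_
          rw [← Finset.mul_sum, sum_pattern_mul_eq_zero w (fun y => s y - t y) C hC hCc (A i) i,
            mul_zero]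
  have hinner : ∀ f : Fin G → Y, ∑ i, A i (S f) * t (f i)
      = (D / p + D / (1 - p)) - D / p * (if ∀ j, f j ∈ Cᶜ then 1 else 0)
        - D / (1 - p) * (if ∀ j, f j ∈ C then 1 else 0) := by
    intro f
    have h0 : (S f).card = 0 ↔ ∀ j, f j ∈ Cᶜ := by
      simp [S, Finset.filter_eq_empty_iff]
    have h1 : (S f).card = G ↔ ∀ j, f j ∈ C := by
      have := Finset.card_eq_iff_eq_univ (S f)
      rw [Fintype.card_fin] at this
      rw [this]
      simp [S, Finset.filter_eq_self]
    have := sum_advantage hG (S f) (D / p) (D / (1 - p))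
    simp only [h0, h1] at this
    rw [← this]
    refine Finset.sum_congr rfl fun i _ => ?_
    simp only [A, ht, hmem, h0, h1]
  have hone : ∑ f : Fin G → Y, ∏ i, w (f i) = 1 := by
    have := sum_prod_ite_forall_mem (G := G) w Finset.univ
    simpa [hw, hnorm θ₀] using this
  have hall := sum_prod_ite_forall_mem (G := G) w C
  have hnone := sum_prod_ite_forall_mem (G := G) w Cᶜ
  rw [hwsum] at hnone
  have hmain : ∑ f : Fin G → Y, (∏ i, w (f i)) * ((1 / (G : ℝ)) * ∑ i, A i (S f) * s (f i))
      = (1 / (G : ℝ)) * ((D / p + D / (1 - p)) - D / p * (1 - p) ^ G - D / (1 - p) * p ^ G) := by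
    calc _ = (1 / (G : ℝ)) * ((D / p + D / (1 - p)) * (∑ f : Fin G → Y, ∏ i, w (f i))
          - D / p * (∑ f : Fin G → Y, (∏ j, w (f j)) * (if ∀ j, f j ∈ Cᶜ then 1 else 0))
          - D / (1 - p) * (∑ f : Fin G → Y, (∏ j, w (f j)) * (if ∀ j, f j ∈ C then 1 else 0))) := by
          rw [hrepl]
          simp only [Finset.mul_sum (s := (Finset.univ : Finset (Fin G → Y))),
            ← Finset.sum_sub_distrib]
          refine Finset.sum_congr rfl fun f _ => ?_
          rw [hinner f]
          ring
      _ = _ := by rw [hone, hall, hnone, mul_one]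
  have hlhs : ∀ (f : Fin G → Y) (i : Fin G), A i (S f) =
      (if (Finset.univ.filter (fun i : Fin G => f i ∈ C)).card = 0 then -(1 / (G : ℝ))
          else if (Finset.univ.filter (fun i : Fin G => f i ∈ C)).card = G then 1 / (G : ℝ)
          else if f i ∈ C then
            1 / ((Finset.univ.filter (fun i : Fin G => f i ∈ C)).card : ℝ)
          else
            -(1 / ((G : ℝ) - ((Finset.univ.filter (fun i : Fin G => f i ∈ C)).card : ℝ)))) := by
    intro f i
    simp only [A, hmem]
    rfl
  simp only [← hlhs]
  refine hmain.trans ?_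
  obtain ⟨k, rfl⟩ : ∃ k, G = k + 1 := ⟨G - 1, by omega⟩
  simp only [Nat.add_sub_cancel, pow_succ]
  field_simp
  ring
end

section
/- Std-normalized DrGRPO expected gradient coefficient: in the finite-policy setting with G ≥ 2, assume 0 < p(θ₀) < 1. For 1 ≤ n ≤ G − 1 let σ̂_n = √(n·(G − n)/(G·(G − 1))). For a group f : Fin G → Y with n(f) = #{i : f i ∈ C}, define advantages A_i(f) = (r(f i) − n(f)/G)/σ̂_{n(f)} when 0 < n(f) < G, and A_i(f) = 0 when n(f) ∈ {0, G}. Then the expected group gradient satisfies ∑ over all f : Fin G → Y of (∏_i π θ₀ (f i)) · (1/G)·∑_i A_i(f)·s(f i) = ((G − 1)/G) · (1/p(θ₀) + 1/q(θ₀)) · ( ∑_{n=1}^{G−1} (G choose n) · p(θ₀)^n · q(θ₀)^(G−n) · σ̂_n ) · deriv (θ ↦ p θ) θ₀. -/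
/-!
Split the groups `f : Fin G → Y` by their success pattern `S = {i | f i ∈ C}`. The groups with
pattern `S` form a product set, so the sum of `∏ j, π (f j)` times the score of one coordinate
factorizes: coordinate `i` contributes the class mean of the score, `p' / p` if `i ∈ S` and
`-p' / q` otherwise, and the whole pattern has mass `p ^ n * q ^ (G - n)` with `n = #S`
(`sum_pattern_score`, `sum_group_by_pattern`). For a mixed pattern the centred rewards then give
`n (1 - n/G) p'/p + (G - n) (n/G) p'/q = (n (G - n) / G) (1/p + 1/q) p'`, and
`n (G - n) = G (G - 1) σ̂_n ^ 2` turns the division by `σ̂_n` into a factor `σ̂_n`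
(`pattern_contribution`). There are `G.choose n` patterns of size `n`.
-/

/-- The sum over all groups with success pattern `S` factorizes over the coordinates; only the
factor of coordinate `i` sees `s`, through the class sums `d` on `C` and `-d` on the complement. -/
lemma sum_pattern_score {Y : Type*} [Fintype Y] [DecidableEq Y] {G : ℕ} (w s : Y → ℝ)
    (C : Finset Y) (p q d : ℝ) (hp : p ≠ 0) (hq : q ≠ 0)
    (hwC : ∑ y ∈ C, w y = p) (hwC' : ∑ y ∈ Cᶜ, w y = q)
    (hsC : ∑ y ∈ C, w y * s y = d) (hsC' : ∑ y ∈ Cᶜ, w y * s y = -d)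
    (S : Finset (Fin G)) (i : Fin G) :
    ∑ f : Fin G → Y with (Finset.univ.filter fun j => f j ∈ C) = S,
        (∏ j, w (f j)) * s (f i)
      = p ^ S.card * q ^ (G - S.card) * (if i ∈ S then d / p else -d / q) := by
  have hfib : (Finset.univ.filter fun f : Fin G → Y =>
      (Finset.univ.filter fun j => f j ∈ C) = S)
      = Fintype.piFinset (fun j => if j ∈ S then C else Cᶜ) := by
    ext f
    simp only [Finset.mem_filter, Finset.mem_univ, true_and, Fintype.mem_piFinset,
      Finset.ext_iff]
    refine forall_congr' fun j => ?_
    by_cases hj : j ∈ S <;> simp [hj]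
  have hterm : ∀ f : Fin G → Y, (∏ j, w (f j)) * s (f i)
      = ∏ j, (w (f j) * if j = i then s (f j) else 1) := by
    intro f
    rw [Finset.prod_mul_distrib]
    simp
  have hfac : ∀ j : Fin G,
      ∑ y ∈ (if j ∈ S then C else Cᶜ), (w y * if j = i then s y else 1)
        = (if j ∈ S then p else q) *
          (if j = i then (if j ∈ S then d / p else -d / q) else 1) := by
    intro j
    by_cases hji : j = i
    · subst hji
      by_cases hj : j ∈ S <;> simp only [hj, if_true, if_false, hsC, hsC'] <;> field_simp
    · by_cases hj : j ∈ S <;> simp only [hji, hj, if_true, if_false, mul_one, hwC, hwC']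
  rw [hfib, Finset.sum_congr rfl fun f _ => hterm f,
    ← Finset.prod_univ_sum (fun j => if j ∈ S then C else Cᶜ)
      (fun j y => w y * if j = i then s y else 1),
    Finset.prod_congr rfl fun j _ => hfac j, Finset.prod_mul_distrib]
  have hcompl : (Finset.univ.filter fun j : Fin G => j ∉ S).card = G - S.card := by
    rw [Finset.filter_not, Finset.filter_mem_eq_inter, Finset.univ_inter,
      ← Finset.compl_eq_univ_sdiff, Finset.card_compl, Fintype.card_fin]
  rw [Finset.prod_ite, Finset.prod_const, Finset.prod_const, hcompl]
  simp

/-- If the weights of the scores depend on the group only through its success pattern, every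
score may be replaced by its mean over the class (correct or incorrect) of its coordinate. -/
lemma sum_group_by_pattern {Y : Type*} [Fintype Y] [DecidableEq Y] {G : ℕ} (w s : Y → ℝ)
    (C : Finset Y) (p q d : ℝ) (hp : p ≠ 0) (hq : q ≠ 0)
    (hwC : ∑ y ∈ C, w y = p) (hwC' : ∑ y ∈ Cᶜ, w y = q)
    (hsC : ∑ y ∈ C, w y * s y = d) (hsC' : ∑ y ∈ Cᶜ, w y * s y = -d)
    (c : ℝ) (A : Finset (Fin G) → Fin G → ℝ) :
    ∑ f : Fin G → Y, (∏ j, w (f j)) *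
        (c * ∑ i, A (Finset.univ.filter fun j => f j ∈ C) i * s (f i))
      = ∑ S : Finset (Fin G), p ^ S.card * q ^ (G - S.card) *
          (c * ∑ i, A S i * (if i ∈ S then d / p else -d / q)) := by
  rw [← Finset.sum_fiberwise (Finset.univ)
    (fun f : Fin G → Y => Finset.univ.filter fun j => f j ∈ C)]
  refine Finset.sum_congr rfl fun S _ => ?_
  calc _ = ∑ f : Fin G → Y with (Finset.univ.filter fun j => f j ∈ C) = S,
        ∑ i, c * A S i * ((∏ j, w (f j)) * s (f i)) := by
        refine Finset.sum_congr rfl fun f hf => ?_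
        rw [(Finset.mem_filter.mp hf).2, Finset.mul_sum, Finset.mul_sum]
        exact Finset.sum_congr rfl fun i _ => by ring
    _ = _ := by
        rw [Finset.sum_comm, Finset.mul_sum, Finset.mul_sum]
        refine Finset.sum_congr rfl fun i _ => ?_
        rw [← Finset.mul_sum, sum_pattern_score w s C p q d hp hq hwC hwC' hsC hsC' S i]
        ring

/-- The contribution of one mixed pattern, with the scores replaced by their class means. -/
lemma pattern_contribution {G : ℕ} (hG : 2 ≤ G) (p q d : ℝ) (hp : p ≠ 0) (hq : q ≠ 0)
    (S : Finset (Fin G)) (h0 : 0 < S.card) (h1 : S.card < G) :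
    (1 / (G : ℝ)) * ∑ i, ((if i ∈ S then (1 : ℝ) else 0) - (S.card : ℝ) / (G : ℝ))
        / Real.sqrt (((S.card : ℝ) * ((G : ℝ) - (S.card : ℝ))) / ((G : ℝ) * ((G : ℝ) - 1)))
        * (if i ∈ S then d / p else -d / q)
      = (((G : ℝ) - 1) / (G : ℝ)) * (1 / p + 1 / q)
        * Real.sqrt (((S.card : ℝ) * ((G : ℝ) - (S.card : ℝ))) / ((G : ℝ) * ((G : ℝ) - 1)))
        * d := by
  set n : ℝ := (S.card : ℝ) with hn
  have hGr : (2 : ℝ) ≤ G := by exact_mod_cast hG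
  have hG0 : (G : ℝ) ≠ 0 := by positivity
  have hG1 : (0 : ℝ) < (G : ℝ) - 1 := by linarith
  have hn0 : 0 < n := by rw [hn]; exact_mod_cast h0
  have hn1 : 0 < (G : ℝ) - n := by rw [sub_pos, hn]; exact_mod_cast h1
  have hpos : 0 < (n * ((G : ℝ) - n)) / ((G : ℝ) * ((G : ℝ) - 1)) := by positivity
  set σ := Real.sqrt ((n * ((G : ℝ) - n)) / ((G : ℝ) * ((G : ℝ) - 1))) with hσ
  have hσ0 : σ ≠ 0 := (Real.sqrt_pos.mpr hpos).ne'
  have hsq : σ ^ 2 * ((G : ℝ) * ((G : ℝ) - 1)) = n * ((G : ℝ) - n) := by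
    rw [hσ, Real.sq_sqrt hpos.le]
    field_simp
  have hsplit : ∀ i : Fin G, ((if i ∈ S then (1 : ℝ) else 0) - n / G) / σ
        * (if i ∈ S then d / p else -d / q)
      = if i ∈ S then (1 - n / G) / σ * (d / p) else (0 - n / G) / σ * (-d / q) := by
    intro i
    split_ifs <;> rfl
  have hcompl : ((Finset.univ.filter fun j : Fin G => j ∉ S).card : ℝ) = G - n := by
    rw [Finset.filter_not, Finset.filter_mem_eq_inter, Finset.univ_inter,
      ← Finset.compl_eq_univ_sdiff, Finset.card_compl, Fintype.card_fin,
      Nat.cast_sub h1.le]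
  rw [Finset.sum_congr rfl fun i _ => hsplit i, Finset.sum_ite, Finset.sum_const,
    Finset.sum_const, nsmul_eq_mul, nsmul_eq_mul, hcompl, Finset.filter_mem_eq_inter,
    Finset.univ_inter, ← hn]
  calc _ = n * (G - n) / (G ^ 2 * σ) * (1 / p + 1 / q) * d := by field_simp; ring
    _ = _ := by rw [← hsq]; field_simp


/-- Std-normalized DrGRPO expected gradient coefficient: in the finite-policy setting with
`G ≥ 2` and `0 < p(θ₀) < 1`, with `σ̂_n = √(n(G−n)/(G(G−1)))` and advantages
`A_i = (r_i − n/G)/σ̂_n` on mixed groups and `0` on degenerate groups, the expected group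
gradient equals
`((G−1)/G)·(1/p + 1/q)·(∑_{n=1}^{G−1} C(G,n) p^n q^(G−n) σ̂_n) · p'(θ₀)`. -/
theorem drgrpo_expected_gradient {Y : Type*} [Fintype Y] [DecidableEq Y] [Nonempty Y]
    (π : ℝ → Y → ℝ) (θ₀ : ℝ)
    (hpos : ∀ θ y, 0 < π θ y) (hnorm : ∀ θ, ∑ y, π θ y = 1)
    (hdiff : ∀ y, DifferentiableAt ℝ (fun θ => π θ y) θ₀)
    (C : Finset Y) (G : ℕ) (hG : 2 ≤ G)
    (hp0 : 0 < ∑ y ∈ C, π θ₀ y) (hp1 : ∑ y ∈ C, π θ₀ y < 1) :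
    ∑ f : Fin G → Y, (∏ i, π θ₀ (f i)) * ((1 / (G : ℝ)) * ∑ i,
          (if 0 < (Finset.univ.filter (fun i : Fin G => f i ∈ C)).card ∧
              (Finset.univ.filter (fun i : Fin G => f i ∈ C)).card < G then
            ((if f i ∈ C then (1 : ℝ) else 0)
                - ((Finset.univ.filter (fun i : Fin G => f i ∈ C)).card : ℝ) / (G : ℝ))
              / Real.sqrt ((((Finset.univ.filter (fun i : Fin G => f i ∈ C)).card : ℝ)
                  * ((G : ℝ) - ((Finset.univ.filter (fun i : Fin G => f i ∈ C)).card : ℝ)))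
                / ((G : ℝ) * ((G : ℝ) - 1)))
          else 0)
          * deriv (fun θ => Real.log (π θ (f i))) θ₀)
      = (((G : ℝ) - 1) / (G : ℝ))
          * (1 / (∑ y ∈ C, π θ₀ y) + 1 / (1 - ∑ y ∈ C, π θ₀ y))
          * (∑ n ∈ Finset.Ioo 0 G, (G.choose n : ℝ) * (∑ y ∈ C, π θ₀ y) ^ n
              * (1 - ∑ y ∈ C, π θ₀ y) ^ (G - n)
              * Real.sqrt (((n : ℝ) * ((G : ℝ) - (n : ℝ))) / ((G : ℝ) * ((G : ℝ) - 1))))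
          * deriv (fun θ => ∑ y ∈ C, π θ y) θ₀ := by
  set p := ∑ y ∈ C, π θ₀ y with hp
  set d := deriv (fun θ => ∑ y ∈ C, π θ y) θ₀ with hd
  have hq0 : (1 : ℝ) - p ≠ 0 := by linarith
  -- The score identity `π * (log π)' = π'`.
  have hscore : ∀ y, π θ₀ y * deriv (fun θ => Real.log (π θ y)) θ₀
      = deriv (fun θ => π θ y) θ₀ := by
    intro y
    have hy := (hpos θ₀ y).ne'
    rw [deriv.log (hdiff y) hy]
    field_simp
  have hwC' : ∑ y ∈ Cᶜ, π θ₀ y = 1 - p := by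
    have := Finset.sum_add_sum_compl C (fun y => π θ₀ y)
    rw [hnorm θ₀] at this
    linarith
  have hsC : ∑ y ∈ C, π θ₀ y * deriv (fun θ => Real.log (π θ y)) θ₀ = d := by
    rw [hd, deriv_fun_sum fun y _ => hdiff y]
    exact Finset.sum_congr rfl fun y _ => hscore y
  have hsC' : ∑ y ∈ Cᶜ, π θ₀ y * deriv (fun θ => Real.log (π θ y)) θ₀ = -d := by
    have htot : ∑ y, deriv (fun θ => π θ y) θ₀ = 0 := by
      rw [← deriv_fun_sum fun y _ => hdiff y]
      simp [hnorm]
    have := Finset.sum_add_sum_compl C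
      (fun y => π θ₀ y * deriv (fun θ => Real.log (π θ y)) θ₀)
    rw [hsC, Finset.sum_congr rfl fun y _ => hscore y, Finset.sum_congr (s₁ := Finset.univ) rfl
      fun y _ => hscore y, htot] at this
    rw [Finset.sum_congr rfl fun y _ => hscore y]
    linarith
  have key := sum_group_by_pattern (G := G) (π θ₀)
    (fun y => deriv (fun θ => Real.log (π θ y)) θ₀) C p (1 - p) d hp0.ne' hq0 hp.symm hwC'
    hsC hsC' (1 / (G : ℝ))
    (fun S i => if 0 < S.card ∧ S.card < G then
      ((if i ∈ S then (1 : ℝ) else 0) - (S.card : ℝ) / (G : ℝ))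
        / Real.sqrt (((S.card : ℝ) * ((G : ℝ) - (S.card : ℝ))) / ((G : ℝ) * ((G : ℝ) - 1)))
      else 0)
  simp only [Finset.mem_filter, Finset.mem_univ, true_and] at key
  rw [key]
  -- Each pattern's contribution depends only on its size.
  set g : ℕ → ℝ := fun n => if 0 < n ∧ n < G then
      p ^ n * (1 - p) ^ (G - n) * ((((G : ℝ) - 1) / (G : ℝ)) * (1 / p + 1 / (1 - p))
        * Real.sqrt (((n : ℝ) * ((G : ℝ) - (n : ℝ))) / ((G : ℝ) * ((G : ℝ) - 1))) * d)
      else 0 with hg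
  have hS : ∀ S : Finset (Fin G), p ^ S.card * (1 - p) ^ (G - S.card) *
      ((1 / (G : ℝ)) * ∑ i, (if 0 < S.card ∧ S.card < G then
        ((if i ∈ S then (1 : ℝ) else 0) - (S.card : ℝ) / (G : ℝ))
          / Real.sqrt (((S.card : ℝ) * ((G : ℝ) - (S.card : ℝ))) / ((G : ℝ) * ((G : ℝ) - 1)))
        else 0) * (if i ∈ S then d / p else -d / (1 - p))) = g S.card := by
    intro S
    by_cases h : 0 < S.card ∧ S.card < G
    · simp only [hg, if_pos h]
      rw [pattern_contribution hG p (1 - p) d hp0.ne' hq0 S h.1 h.2]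
    · simp only [hg, if_neg h, zero_mul, Finset.sum_const_zero, mul_zero]
  rw [Finset.sum_congr rfl fun S _ => hS S, ← Finset.powerset_univ,
    Finset.sum_powerset_apply_card, Finset.card_univ, Fintype.card_fin]
  have hsub : Finset.Ioo 0 G ⊆ Finset.range (G + 1) := by
    intro n hn
    simp only [Finset.mem_Ioo, Finset.mem_range] at hn ⊢
    omega
  rw [← Finset.sum_subset hsub, Finset.mul_sum, Finset.sum_mul]
  · refine Finset.sum_congr rfl fun n hn => ?_
    simp only [hg, if_pos (Finset.mem_Ioo.mp hn), nsmul_eq_mul]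
    ring
  · intro n _ hn
    rw [Finset.mem_Ioo] at hn
    simp only [hg, if_neg hn, smul_zero]
end
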